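/- Let (A¹, B¹) be an n₁×m₁ bimatrix game, (A², B²) an n₂×m₂ bimatrix game, and let (A, B) be their product game. If (x, y) is a Nash equilibrium of (A, B), then (x¹, y¹) given by the marginals x¹ i = ∑ l : Fin n₂, x (i, l) and y¹ j = ∑ l : Fin m₂, y (j, l) is a Nash equilibrium of (A¹, B¹). -/

import Mathlib

open Finset

/-- A mixed strategy: nonnegative and sums to 1. -/
def IsMixed {n : Type*} [Fintype n] (x : n → ℝ) : Prop :=
  (∀ i, 0 ≤ x i) ∧ ∑ i, x i = 1

/-- Expected payoff for the matrix `M` under strategies `x`, `y`. -/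
def payoff {n m : Type*} [Fintype n] [Fintype m] (M : Matrix n m ℝ)
    (x : n → ℝ) (y : m → ℝ) : ℝ :=
  ∑ i, ∑ j, x i * M i j * y j

/-- Nash equilibrium of the bimatrix game `(A, B)`. -/
def IsNash {n m : Type*} [Fintype n] [Fintype m] (A B : Matrix n m ℝ)
    (x : n → ℝ) (y : m → ℝ) : Prop :=
  IsMixed x ∧ IsMixed y ∧
  (∀ x', IsMixed x' → payoff A x' y ≤ payoff A x y) ∧
  (∀ y', IsMixed y' → payoff B x y' ≤ payoff B x y)

/-- The product game of two bimatrix games (one payoff matrix). -/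
def prodGame {n₁ m₁ n₂ m₂ : Type*} (M₁ : Matrix n₁ m₁ ℝ) (M₂ : Matrix n₂ m₂ ℝ) :
    Matrix (n₁ × n₂) (m₁ × m₂) ℝ :=
  fun p q => M₁ p.1 q.1 + M₂ p.2 q.2

/-- One payoff matrix of the sum game via constant `c` on the off-diagonal blocks. -/
def sumGame {n₁ m₁ n₂ m₂ : Type*} (M₁ : Matrix n₁ m₁ ℝ) (M₂ : Matrix n₂ m₂ ℝ)
    (c : ℝ) : Matrix (n₁ ⊕ n₂) (m₁ ⊕ m₂) ℝ :=
  fun i j => match i, j with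
    | Sum.inl i, Sum.inl j => M₁ i j
    | Sum.inr i, Sum.inr j => M₂ i j
    | _, _ => c

/-!
The payoff of a product game depends on a joint strategy only through its marginals: it is the
payoff of the first game at the first marginals plus that of the second game at the second
marginals. A player who wants to try `u` in the first game can therefore play the independent
product of `u` with their own second marginal; this leaves the second summand unchanged, so a
profitable deviation in the first game would be profitable in the product game.

The two players are exchanged by transposing payoff matrices, so it suffices to treat best
responses of the row player.
-/

section Marginals

open Matrix

variable {ι κ ι' κ' R : Type*}

/-- The first marginal of a joint strategy, without any normalisation or positivity assumption. -/
def fstMarginal [Fintype κ] [AddCommMonoid R] (x : ι × κ → R) (i : ι) : R :=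
  ∑ k, x (i, k)

/-- The second marginal of a joint strategy, without any normalisation or positivity assumption. -/
def sndMarginal [Fintype ι] [AddCommMonoid R] (x : ι × κ → R) (k : κ) : R :=
  ∑ i, x (i, k)

/-- The joint strategy in which the two components are played independently, according to `u`
and `v`. -/
def prodStrategy [Mul R] (u : ι → R) (v : κ → R) (p : ι × κ) : R :=
  u p.1 * v p.2

theorem sum_fstMarginal [Fintype ι] [Fintype κ] [AddCommMonoid R] (x : ι × κ → R) :
    ∑ i, fstMarginal x i = ∑ p, x p :=
  (Fintype.sum_prod_type x).symm

theorem sum_sndMarginal [Fintype ι] [Fintype κ] [AddCommMonoid R] (x : ι × κ → R) :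
    ∑ k, sndMarginal x k = ∑ p, x p :=
  (Fintype.sum_prod_type_right x).symm

theorem fstMarginal_prodStrategy [Fintype κ] [NonAssocSemiring R] (u : ι → R) {v : κ → R}
    (hv : ∑ k, v k = 1) : fstMarginal (prodStrategy u v) = u := by
  ext i
  simp only [fstMarginal, prodStrategy, ← mul_sum, hv, mul_one]

theorem sndMarginal_prodStrategy [Fintype ι] [NonAssocSemiring R] {u : ι → R} (v : κ → R)
    (hu : ∑ i, u i = 1) : sndMarginal (prodStrategy u v) = v := by
  ext k
  simp only [sndMarginal, prodStrategy, ← sum_mul, hu, one_mul]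

section Pairing

variable [NonUnitalNonAssocSemiring R]

theorem fstMarginal_dotProduct [Fintype ι] [Fintype κ] (x : ι × κ → R) (f : ι → R) :
    fstMarginal x ⬝ᵥ f = x ⬝ᵥ (f ∘ Prod.fst) := by
  simp only [dotProduct, fstMarginal, sum_mul, Fintype.sum_prod_type, Function.comp_apply]

theorem sndMarginal_dotProduct [Fintype ι] [Fintype κ] (x : ι × κ → R) (f : κ → R) :
    sndMarginal x ⬝ᵥ f = x ⬝ᵥ (f ∘ Prod.snd) := by
  simp only [dotProduct, sndMarginal, sum_mul, Fintype.sum_prod_type_right, Function.comp_apply]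

theorem submatrix_fst_mulVec [Fintype ι'] [Fintype κ'] (M : Matrix ι ι' R) (y : ι' × κ' → R) :
    M.submatrix (Prod.fst : ι × κ → ι) Prod.fst *ᵥ y = (M *ᵥ fstMarginal y) ∘ Prod.fst := by
  ext p
  simp only [mulVec, dotProduct, fstMarginal, submatrix_apply, mul_sum, Fintype.sum_prod_type,
    Function.comp_apply]

theorem submatrix_snd_mulVec [Fintype ι'] [Fintype κ'] (M : Matrix κ κ' R) (y : ι' × κ' → R) :
    M.submatrix (Prod.snd : ι × κ → κ) Prod.snd *ᵥ y = (M *ᵥ sndMarginal y) ∘ Prod.snd := by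
  ext p
  simp only [mulVec, dotProduct, sndMarginal, submatrix_apply, mul_sum,
    Fintype.sum_prod_type_right, Function.comp_apply]

end Pairing

end Marginals

section MixedStrategies

variable {ι κ : Type*} [Fintype ι] [Fintype κ]

theorem IsMixed.fstMarginal {x : ι × κ → ℝ} (hx : IsMixed x) : IsMixed (fstMarginal x) :=
  ⟨fun _ => sum_nonneg fun _ _ => hx.1 _, (sum_fstMarginal x).trans hx.2⟩

theorem IsMixed.sndMarginal {x : ι × κ → ℝ} (hx : IsMixed x) : IsMixed (sndMarginal x) :=
  ⟨fun _ => sum_nonneg fun _ _ => hx.1 _, (sum_sndMarginal x).trans hx.2⟩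

theorem IsMixed.prodStrategy {u : ι → ℝ} {v : κ → ℝ} (hu : IsMixed u) (hv : IsMixed v) :
    IsMixed (prodStrategy u v) := by
  refine ⟨fun p => mul_nonneg (hu.1 p.1) (hv.1 p.2), ?_⟩
  rw [← sum_fstMarginal, fstMarginal_prodStrategy u hv.2, hu.2]

end MixedStrategies

section BestResponses

open Matrix

variable {n m n₁ m₁ n₂ m₂ : Type*}

theorem prodGame_eq_submatrix_add_submatrix (M₁ : Matrix n₁ m₁ ℝ)
    (M₂ : Matrix n₂ m₂ ℝ) :
    prodGame M₁ M₂ = M₁.submatrix Prod.fst Prod.fst + M₂.submatrix Prod.snd Prod.snd :=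
  rfl

theorem prodGame_transpose (M₁ : Matrix n₁ m₁ ℝ) (M₂ : Matrix n₂ m₂ ℝ) :
    (prodGame M₁ M₂)ᵀ = prodGame M₁ᵀ M₂ᵀ :=
  rfl

variable [Fintype n] [Fintype m] [Fintype n₁] [Fintype m₁] [Fintype n₂] [Fintype m₂]

theorem payoff_eq_dotProduct_mulVec (M : Matrix n m ℝ) (x : n → ℝ) (y : m → ℝ) :
    payoff M x y = x ⬝ᵥ M *ᵥ y := by
  simp only [payoff, dotProduct, mulVec, mul_sum, mul_assoc]

theorem payoff_transpose (M : Matrix n m ℝ) (x : n → ℝ) (y : m → ℝ) :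
    payoff Mᵀ y x = payoff M x y := by
  rw [payoff_eq_dotProduct_mulVec, payoff_eq_dotProduct_mulVec, mulVec_transpose, dotProduct_comm,
    dotProduct_mulVec]

theorem payoff_prodGame (M₁ : Matrix n₁ m₁ ℝ) (M₂ : Matrix n₂ m₂ ℝ) (x : n₁ × n₂ → ℝ)
    (y : m₁ × m₂ → ℝ) :
    payoff (prodGame M₁ M₂) x y =
      payoff M₁ (fstMarginal x) (fstMarginal y) + payoff M₂ (sndMarginal x) (sndMarginal y) := by
  simp only [payoff_eq_dotProduct_mulVec, prodGame_eq_submatrix_add_submatrix, add_mulVec,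
    dotProduct_add, submatrix_fst_mulVec, submatrix_snd_mulVec, fstMarginal_dotProduct,
    sndMarginal_dotProduct]

/-- `x` is a best response of the row player, with payoff matrix `M`, to `y`. A best response of
the column player is expressed through the transposed payoff matrix. -/
def IsBestResponse (M : Matrix n m ℝ) (x : n → ℝ) (y : m → ℝ) : Prop :=
  IsMixed x ∧ ∀ x', IsMixed x' → payoff M x' y ≤ payoff M x y

theorem isNash_iff_isBestResponse {A B : Matrix n m ℝ} {x : n → ℝ} {y : m → ℝ} :
    IsNash A B x y ↔ IsBestResponse A x y ∧ IsBestResponse Bᵀ y x := by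
  simp only [IsNash, IsBestResponse, payoff_transpose]
  tauto

theorem IsBestResponse.fstMarginal {M₁ : Matrix n₁ m₁ ℝ} {M₂ : Matrix n₂ m₂ ℝ}
    {x : n₁ × n₂ → ℝ} {y : m₁ × m₂ → ℝ} (h : IsBestResponse (prodGame M₁ M₂) x y) :
    IsBestResponse M₁ (fstMarginal x) (fstMarginal y) := by
  obtain ⟨hx, hbest⟩ := h
  refine ⟨hx.fstMarginal, fun u hu => ?_⟩
  have hdev := hbest _ (hu.prodStrategy hx.sndMarginal)
  rw [payoff_prodGame, payoff_prodGame, fstMarginal_prodStrategy u hx.sndMarginal.2,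
    sndMarginal_prodStrategy _ hu.2] at hdev
  exact le_of_add_le_add_right hdev

theorem nash_of_product_marginal_fst_general {A₁ B₁ : Matrix n₁ m₁ ℝ} {A₂ B₂ : Matrix n₂ m₂ ℝ}
    {x : n₁ × n₂ → ℝ} {y : m₁ × m₂ → ℝ} (h : IsNash (prodGame A₁ A₂) (prodGame B₁ B₂) x y) :
    IsNash A₁ B₁ (fstMarginal x) (fstMarginal y) := by
  rw [isNash_iff_isBestResponse, prodGame_transpose] at h
  exact isNash_iff_isBestResponse.2 ⟨h.1.fstMarginal, h.2.fstMarginal⟩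

end BestResponses

theorem nash_of_product_marginal_fst {n₁ m₁ n₂ m₂ : ℕ}
    (A₁ B₁ : Matrix (Fin n₁) (Fin m₁) ℝ) (A₂ B₂ : Matrix (Fin n₂) (Fin m₂) ℝ)
    (x : Fin n₁ × Fin n₂ → ℝ) (y : Fin m₁ × Fin m₂ → ℝ)
    (h : IsNash (prodGame A₁ A₂) (prodGame B₁ B₂) x y) :
    IsNash A₁ B₁ (fun i => ∑ l : Fin n₂, x (i, l)) (fun j => ∑ l : Fin m₂, y (j, l)) :=
  nash_of_product_marginal_fst_general h
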